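/- Let k be a field of characteristic p ≥ 3 and let D be the k-derivation on k[x,y,z] defined by D(x) = 0, D(y) = x, D(z) = y. Then the invariant ring k[x,y,z]^D equals k[x, y^p, z^p, y^2 - 2xz], and it is isomorphic to k[X,Y,Z,W]/(Y^2 - W^p - X^p Z) via X ↦ 2x, Y ↦ y^p, Z ↦ z^p, W ↦ y^2 - 2xz. -/

import Mathlib

open MvPolynomial

/-- The invariant subalgebra `R^D = ker D` of a derivation. -/
def invariants {k : Type*} [CommRing k] {d : ℕ}
    (D : Derivation k (MvPolynomial (Fin d) k) (MvPolynomial (Fin d) k)) :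
    Subalgebra k (MvPolynomial (Fin d) k) where
  carrier := {f | D f = 0}
  mul_mem' := by
    intro a b ha hb
    simp only [Set.mem_setOf_eq] at ha hb ⊢
    rw [Derivation.leibniz, ha, hb, smul_zero, smul_zero, add_zero]
  add_mem' := by
    intro a b ha hb
    simp only [Set.mem_setOf_eq] at ha hb ⊢
    rw [map_add, ha, hb, add_zero]
  algebraMap_mem' := fun r => by
    simp only [Set.mem_setOf_eq, Derivation.map_algebraMap]

/-- The derivation on `k[x,y,z]` with `D x = 0`, `D y = x`, `D z = y`. -/
noncomputable def D6 (k : Type*) [CommRing k] :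
    Derivation k (MvPolynomial (Fin 3) k) (MvPolynomial (Fin 3) k) :=
  MvPolynomial.mkDerivation k ![0, X 0, X 1]

/-!
Write `u = y²`, `w = y² - 2xz` and `E = k[2x, w, z]`, a polynomial ring containing `u = w + 2xz`.
Since `2` is invertible, `k[x,y,z] = E ⊕ E y` is the splitting into even and odd parts in `y`, and
`D a = ∂a · y` and `D (b y) = u ∂b + x b` for `a, b ∈ E`, where `∂ = ∂/∂z` on `E`. So `a + b y` is
invariant iff `∂a = 0` and `u ∂b + x b = 0`. In the second equation put `b = uʲ c`: as `∂u = 2x`, it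
becomes `u ∂c + (2j + 1) x c = 0`. If `2j + 1` is invertible then `u ∣ c`, because `x, u` is a
regular sequence. This goes on up to `2j + 1 = p`, where the equation reads `∂c = 0` and
`b y = c yᵖ`. As `ker ∂ = k[2x, w, zᵖ]`, the invariants are `k[2x, w, zᵖ] ⊕ k[2x, w, zᵖ] yᵖ`. The
relation also brings every element of `k[X,Y,Z,W]` into this form, so there are no further
relations.
-/

section General

variable {R : Type*}

theorem isUnit_two_of_algebra [CommSemiring R] (A : Type*) [Semiring A] [Algebra R A]
    (h : IsUnit (2 : R)) : IsUnit (2 : A) := by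
  simpa only [map_ofNat] using h.map (algebraMap R A)

theorem isUnit_two_of_charP_ne_two [CommRing R] {p : ℕ} [hp : Fact p.Prime] [CharP R p]
    (h2 : p ≠ 2) : IsUnit (2 : R) :=
  (CharP.isUnit_ofNat_iff hp.out).mpr <|
    (Nat.prime_dvd_prime_iff_eq hp.out Nat.prime_two).not.mpr h2

theorem mem_of_two_mul_mem {A : Type*} [CommSemiring R] [Semiring A] [Algebra R A]
    (h2 : IsUnit (2 : R)) {S : Subalgebra R A} {f : A} (hf : 2 * f ∈ S) : f ∈ S := by
  have hsmul : 2 * f = (2 : R) • f := by rw [Algebra.smul_def, map_ofNat]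
  rw [hsmul] at hf
  exact (Submodule.smul_mem_iff_of_isUnit S.toSubmodule h2).mp hf

theorem exists_sub_add_mul_mem_of_mem_adjoin {A B : Type*} [CommSemiring R] [CommSemiring A]
    [CommRing B] [Algebra R A] [Algebra R B] (ε : A →ₐ[R] B) (I : Ideal B) {u : A} {y : B}
    (hy : y ^ 2 - ε u ∈ I) {f : B} (hf : f ∈ Algebra.adjoin R (insert y (Set.range ε))) :
    ∃ a b, f - (ε a + ε b * y) ∈ I := by
  induction hf using Algebra.adjoin_induction with
  | mem f hf =>
    obtain rfl | ⟨a, rfl⟩ := hf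
    · exact ⟨0, 1, by simp⟩
    · exact ⟨a, 0, by simp⟩
  | algebraMap r => exact ⟨algebraMap R A r, 0, by simp⟩
  | add f g _ _ hf hg =>
    obtain ⟨a, b, hf⟩ := hf
    obtain ⟨c, d, hg⟩ := hg
    refine ⟨a + c, b + d, ?_⟩
    convert I.add_mem hf hg using 1
    simp only [map_add]
    ring
  | mul f g _ _ hf hg =>
    obtain ⟨a, b, hf⟩ := hf
    obtain ⟨c, d, hg⟩ := hg
    refine ⟨a * c + b * d * u, a * d + b * c, ?_⟩
    convert I.add_mem (I.add_mem (I.mul_mem_right g hf) (I.mul_mem_left (ε a + ε b * y) hg))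
      (I.mul_mem_left (ε (b * d)) hy) using 1
    simp only [map_add, map_mul]
    ring

theorem exists_eq_pow_mul_of_derivation_eq {A : Type*} [CommSemiring R] [CommRing A]
    [Algebra R A] (δ : Derivation R A A) {u b : A} (hu : IsLeftRegular u)
    (hdvd : ∀ c, u ∣ δ u * c → u ∣ c) (hb : 2 * u * δ b + δ u * b = 0) (m : ℕ)
    (hm : ∀ j < m, IsUnit ((2 * j + 1 : ℕ) : A)) :
    ∃ c, b = u ^ m * c ∧ 2 * u * δ c + (2 * m + 1 : ℕ) * (δ u * c) = 0 := by
  induction m with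
  | zero => exact ⟨b, by simp, by simpa using hb⟩
  | succ m ih =>
    obtain ⟨c, rfl, hc⟩ := ih fun j hj ↦ hm j (by omega)
    have hu_dvd : u ∣ (2 * m + 1 : ℕ) * (δ u * c) := ⟨-2 * δ c, by linear_combination hc⟩
    obtain ⟨c, rfl⟩ := hdvd c ((hm m m.lt_succ_self).dvd_mul_left.mp hu_dvd)
    refine ⟨c, by ring, hu ?_⟩
    simp only [Derivation.leibniz, smul_eq_mul] at hc
    push_cast at hc ⊢
    linear_combination hc

end General

section MvPolynomial

variable {R σ : Type*}

theorem derivation_aeval [CommSemiring R] [Fintype σ] {A M : Type*} [CommSemiring A] [Algebra R A]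
    [AddCommMonoid M] [Module A M] [Module R M] (D : Derivation R A M) (g : σ → A)
    (f : MvPolynomial σ R) : D (aeval g f) = ∑ i, aeval g (pderiv i f) • D (g i) := by
  classical
  induction f using MvPolynomial.induction_on with
  | C r => simp
  | add f₁ f₂ h₁ h₂ => simp only [map_add, h₁, h₂, add_smul, Finset.sum_add_distrib]
  | mul_X f j hf =>
    simp only [map_mul, aeval_X, Derivation.leibniz, hf, pderiv_X, smul_eq_mul, map_add, add_smul,
      Finset.sum_add_distrib, Finset.smul_sum, mul_smul]
    simp [Pi.single_apply, apply_ite, ite_smul]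

theorem X_dvd_of_X_dvd_X_mul [CommSemiring R] {i j : σ} (hij : i ≠ j) {f : MvPolynomial σ R}
    (h : X i ∣ X j * f) : X i ∣ f := by
  classical
  rw [X_dvd_iff_modMonomial_eq_zero] at h ⊢
  ext m
  by_cases hm : Finsupp.single i 1 ≤ m
  · rw [coeff_modMonomial_of_le _ hm, coeff_zero]
  · have hjm : ¬ Finsupp.single i 1 ≤ Finsupp.single j 1 + m := by
      simpa [hij] using hm
    rw [coeff_modMonomial_of_not_le _ hm, ← coeff_X_mul m j f,
      ← coeff_modMonomial_of_not_le _ hjm, h, coeff_zero, coeff_zero]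

theorem dvd_of_mem_support_of_pderiv_eq_zero [CommRing R] {p : ℕ} [hp : Fact p.Prime] [CharP R p]
    {i : σ} {f : MvPolynomial σ R} (hf : pderiv i f = 0) {m : σ →₀ ℕ} (hm : m ∈ f.support) :
    p ∣ m i := by
  by_contra hndvd
  have hle : Finsupp.single i 1 ≤ m := by
    rw [Finsupp.single_le_iff, Nat.one_le_iff_ne_zero]
    exact fun h ↦ hndvd (h ▸ dvd_zero p)
  have hcoeff := coeff_pderiv (i := i) f (m - Finsupp.single i 1)
  have hmi : (m - Finsupp.single i 1 : σ →₀ ℕ) i + 1 = m i := by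
    simpa using DFunLike.congr_fun (tsub_add_cancel_of_le hle) i
  rw [hf, coeff_zero, tsub_add_cancel_of_le hle, ← Nat.cast_add_one, hmi, eq_comm,
    ((CharP.isUnit_natCast_iff hp.out).mpr hndvd).mul_left_eq_zero] at hcoeff
  exact mem_support_iff.mp hm hcoeff

variable [CommRing R] [DecidableEq σ]

/-- The substitution `X i ↦ X i ^ n` in the single variable `X i`; `MvPolynomial.expand` does this
in all variables at once. -/
noncomputable def expandAt (i : σ) (n : ℕ) : MvPolynomial σ R →ₐ[R] MvPolynomial σ R :=
  aeval (Function.update X i (X i ^ n))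

theorem expandAt_X_self (i : σ) (n : ℕ) : expandAt i n (X i : MvPolynomial σ R) = X i ^ n := by
  simp [expandAt]

theorem expandAt_X_of_ne {i j : σ} (h : j ≠ i) (n : ℕ) :
    expandAt i n (X j : MvPolynomial σ R) = X j := by
  simp [expandAt, h]

theorem expandAt_injective (i : σ) {n : ℕ} (hn : 0 < n) :
    Function.Injective (expandAt i n : MvPolynomial σ R →ₐ[R] MvPolynomial σ R) := by
  let f : σ → Polynomial R := Function.update (fun _ ↦ Polynomial.X) i (Polynomial.X ^ n)
  have hf (j : σ) : Transcendental R (f j) := by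
    by_cases hj : j = i
    · simpa [f, hj] using (Polynomial.transcendental_X R).pow hn
    · simpa [f, hj] using Polynomial.transcendental_X R
  have hX : Function.update X i (X i ^ n) =
      fun j ↦ Polynomial.aeval (X j : MvPolynomial σ R) (f j) := by
    ext1 j
    by_cases hj : j = i
    · subst hj
      simp [f]
    · simp [f, hj]
  rw [expandAt, hX]
  exact algebraicIndependent_polynomial_aeval_X f hf

theorem mem_range_expandAt {i : σ} {n : ℕ} {f : MvPolynomial σ R}
    (hf : ∀ m ∈ f.support, n ∣ m i) :
    f ∈ (expandAt i n : MvPolynomial σ R →ₐ[R] MvPolynomial σ R).range := by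
  rw [f.as_sum]
  refine sum_mem fun m hm ↦ ?_
  rw [monomial_eq]
  refine mul_mem (Subalgebra.algebraMap_mem _ _) (prod_mem fun j _ ↦ ?_)
  by_cases hj : j = i
  · subst hj
    obtain ⟨l, hl⟩ := hf m hm
    exact ⟨X j ^ l, by simp [expandAt_X_self, hl, pow_mul]⟩
  · exact ⟨X j ^ m j, by simp [expandAt_X_of_ne hj]⟩

theorem mem_range_expandAt_of_pderiv_eq_zero {p : ℕ} [Fact p.Prime] [CharP R p] {i : σ}
    {f : MvPolynomial σ R} (hf : pderiv i f = 0) :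
    f ∈ (expandAt i p : MvPolynomial σ R →ₐ[R] MvPolynomial σ R).range :=
  mem_range_expandAt fun _ hm ↦ dvd_of_mem_support_of_pderiv_eq_zero hf hm

end MvPolynomial

namespace D6

variable {k : Type*} [CommRing k]

section EvenPart

variable (k) in
/-- The parametrisation `k[2x, w, z] → k[x,y,z]`, with `w = y² - 2xz`, of the polynomials that are
even in `y`. Using `2x` as the first coordinate matches the presentation of the invariant ring. -/
noncomputable def evenHom : MvPolynomial (Fin 3) k →ₐ[k] MvPolynomial (Fin 3) k :=
  aeval ![2 * X 0, X 1 ^ 2 - 2 * (X 0 * X 2), X 2]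

variable (k) in
/-- The polynomial `y² = w + 2xz` in the coordinates `2x, w, z` of `evenHom`. -/
noncomputable def ySq : MvPolynomial (Fin 3) k := X 1 + X 0 * X 2

theorem evenHom_ySq : evenHom k (ySq k) = X 1 ^ 2 := by
  simp [evenHom, ySq, mul_assoc]

theorem evenHom_injective (h2 : IsUnit (2 : k)) : Function.Injective (evenHom k) := by
  obtain ⟨c, hc⟩ := isUnit_iff_exists_inv.mp (isUnit_two_of_algebra (MvPolynomial (Fin 3) k) h2)
  let shear : MvPolynomial (Fin 3) k →ₐ[k] MvPolynomial (Fin 3) k :=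
    aeval ![2 * X 0, X 1 - 2 * (X 0 * X 2), X 2]
  let unshear : MvPolynomial (Fin 3) k →ₐ[k] MvPolynomial (Fin 3) k :=
    aeval ![c * X 0, X 1 + X 0 * X 2, X 2]
  have hshear : evenHom k = (expandAt 1 2).comp shear := by
    ext i : 1
    fin_cases i <;> simp [evenHom, shear, expandAt, map_ofNat]
  have hunshear : unshear.comp shear = AlgHom.id k _ := by
    ext i : 1
    fin_cases i <;> simp [unshear, shear, map_ofNat, ← mul_assoc, hc]
  have hinv : Function.LeftInverse unshear shear := AlgHom.congr_fun hunshear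
  rw [hshear, AlgHom.coe_comp]
  exact (expandAt_injective 1 two_pos).comp hinv.injective

theorem evenHom_add_mul_X_eq_zero (h2 : IsUnit (2 : k)) {a b : MvPolynomial (Fin 3) k}
    (h : evenHom k a + evenHom k b * X 1 = 0) : a = 0 ∧ b = 0 := by
  let negY : MvPolynomial (Fin 3) k →ₐ[k] MvPolynomial (Fin 3) k := aeval ![X 0, -X 1, X 2]
  have hnegY_comp : negY.comp (evenHom k) = evenHom k := by
    ext i : 1
    fin_cases i <;> simp [negY, evenHom, map_ofNat]
  have hnegY (f) : negY (evenHom k f) = evenHom k f := AlgHom.congr_fun hnegY_comp f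
  have hnegY_X : negY (X 1) = -X 1 := by simp [negY]
  have hneg : evenHom k a - evenHom k b * X 1 = 0 := by
    rw [sub_eq_add_neg, ← mul_neg, ← hnegY_X, ← hnegY a, ← hnegY b, ← map_mul, ← map_add, h,
      map_zero]
  have ha : evenHom k a = 0 := by
    rw [← (isUnit_two_of_algebra _ h2).mul_right_eq_zero]
    linear_combination h + hneg
  have hb : evenHom k b = 0 := by
    rw [ha, zero_add] at h
    exact isRegular_X.right.mul_right_eq_zero_iff.mp h
  exact ⟨(map_eq_zero_iff _ (evenHom_injective h2)).mp ha,
    (map_eq_zero_iff _ (evenHom_injective h2)).mp hb⟩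

theorem exists_eq_evenHom_add_mul_X (h2 : IsUnit (2 : k)) (f : MvPolynomial (Fin 3) k) :
    ∃ a b, f = evenHom k a + evenHom k b * X 1 := by
  have htop : Algebra.adjoin k (insert (X 1) (Set.range (evenHom k))) = ⊤ := by
    rw [eq_top_iff, ← adjoin_range_X, Algebra.adjoin_le_iff]
    rintro _ ⟨i, rfl⟩
    fin_cases i
    · exact mem_of_two_mul_mem h2 (Algebra.subset_adjoin (.inr ⟨X 0, by simp [evenHom]⟩))
    · exact Algebra.subset_adjoin (.inl rfl)
    · exact Algebra.subset_adjoin (.inr ⟨X 2, by simp [evenHom]⟩)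
  obtain ⟨a, b, hab⟩ := exists_sub_add_mul_mem_of_mem_adjoin (evenHom k) ⊥ (u := ySq k)
    (by simp [evenHom_ySq]) (htop ▸ Algebra.mem_top : f ∈ _)
  exact ⟨a, b, sub_eq_zero.mp hab⟩

theorem isLeftRegular_ySq (h2 : IsUnit (2 : k)) : IsLeftRegular (ySq k) := by
  refine isLeftRegular_of_non_zero_divisor _ fun c hc ↦ ?_
  have hsq : X 1 ^ 2 * evenHom k c = 0 := by rw [← evenHom_ySq, ← map_mul, hc, map_zero]
  exact (map_eq_zero_iff _ (evenHom_injective h2)).mp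
    ((isRegular_X_pow 2).left.mul_left_eq_zero_iff.mp hsq)

theorem ySq_dvd_of_ySq_dvd_X_mul {f : MvPolynomial (Fin 3) k} (h : ySq k ∣ X 0 * f) :
    ySq k ∣ f := by
  obtain ⟨g, hg⟩ := h
  have hX : X 0 ∣ X 1 * g := ⟨f - X 2 * g, by rw [ySq] at hg; linear_combination -hg⟩
  obtain ⟨g, rfl⟩ := X_dvd_of_X_dvd_X_mul (by decide) hX
  exact ⟨g, isRegular_X.left (by linear_combination hg)⟩

end EvenPart

section Derivation

theorem apply_evenHom (a : MvPolynomial (Fin 3) k) :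
    D6 k (evenHom k a) = evenHom k (pderiv 2 a) * X 1 := by
  have hX (i : Fin 3) : D6 k (X i) = ![0, X 0, X 1] i := mkDerivation_X ..
  have h2 : D6 k 2 = 0 := by simpa using (D6 k).map_natCast 2
  rw [evenHom, derivation_aeval, Fin.sum_univ_three]
  simp [Derivation.leibniz_pow, hX, h2]
  ring

theorem evenHom_mem_invariants {a : MvPolynomial (Fin 3) k} (ha : pderiv 2 a = 0) :
    evenHom k a ∈ invariants (D6 k) := by
  change D6 k (evenHom k a) = 0
  rw [apply_evenHom, ha, map_zero, zero_mul]

theorem two_mul_apply_evenHom_add_mul_X (a b : MvPolynomial (Fin 3) k) :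
    2 * D6 k (evenHom k a + evenHom k b * X 1) =
      evenHom k (2 * ySq k * pderiv 2 b + X 0 * b) + evenHom k (2 * pderiv 2 a) * X 1 := by
  have hX0 : evenHom k (X 0) = 2 * X 0 := by simp [evenHom]
  have hX1 : D6 k (X 1) = X 0 := by simp [D6, mkDerivation_X]
  simp only [map_add, map_mul, map_ofNat, Derivation.leibniz, apply_evenHom, smul_eq_mul,
    evenHom_ySq, hX0, hX1]
  ring

theorem apply_pow_char (p : ℕ) [CharP k p] (f : MvPolynomial (Fin 3) k) : D6 k (f ^ p) = 0 := by
  rw [Derivation.leibniz_pow, ← Nat.cast_smul_eq_nsmul k, CharP.cast_eq_zero, zero_smul]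

end Derivation

section Presentation

variable (k) in
/-- The presentation `X ↦ 2x, Y ↦ yᵖ, Z ↦ zᵖ, W ↦ y² - 2xz` of the invariant ring, the variables
`X, Y, Z, W` being numbered from `0` to `3`. -/
noncomputable def presentation (p : ℕ) : MvPolynomial (Fin 4) k →ₐ[k] MvPolynomial (Fin 3) k :=
  aeval ![2 * X 0, X 1 ^ p, X 2 ^ p, X 1 ^ 2 - 2 * (X 0 * X 2)]

variable (k) in
/-- The relation `Y² - Wᵖ - XᵖZ` between the generators of the invariant ring. -/
noncomputable def relation (p : ℕ) : MvPolynomial (Fin 4) k := X 1 ^ 2 - X 3 ^ p - X 0 ^ p * X 2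

variable (k) in
/-- The inclusion of `k[X, W, Z]`, in the order of the coordinates of `evenHom`, in
`k[X, Y, Z, W]`. -/
noncomputable def inclXWZ : MvPolynomial (Fin 3) k →ₐ[k] MvPolynomial (Fin 4) k :=
  rename ![0, 3, 2]

theorem exists_sub_inclXWZ_add_mul_X_mem_span (p : ℕ) (F : MvPolynomial (Fin 4) k) :
    ∃ a b, F - (inclXWZ k a + inclXWZ k b * X 1) ∈ Ideal.span {relation k p} := by
  have htop : Algebra.adjoin k (insert (X 1) (Set.range (inclXWZ k))) = ⊤ := by
    rw [eq_top_iff, ← adjoin_range_X, Algebra.adjoin_le_iff]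
    rintro _ ⟨i, rfl⟩
    apply Algebra.subset_adjoin
    fin_cases i
    · exact .inr ⟨X 0, by simp [inclXWZ]⟩
    · exact .inl rfl
    · exact .inr ⟨X 2, by simp [inclXWZ]⟩
    · exact .inr ⟨X 1, by simp [inclXWZ]⟩
  refine exists_sub_add_mul_mem_of_mem_adjoin (inclXWZ k) _ (u := X 1 ^ p + X 0 ^ p * X 2) ?_
    (htop ▸ Algebra.mem_top)
  rw [Ideal.mem_span_singleton]
  simp [inclXWZ, relation, sub_sub]

theorem presentation_inclXWZ (p : ℕ) (a : MvPolynomial (Fin 3) k) :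
    presentation k p (inclXWZ k a) = evenHom k (expandAt 2 p a) := by
  have hcomp : (presentation k p).comp (inclXWZ k) = (evenHom k).comp (expandAt 2 p) := by
    ext i : 1
    fin_cases i <;> simp [presentation, inclXWZ, evenHom, expandAt]
  exact AlgHom.congr_fun hcomp a

theorem presentation_inclXWZ_add_mul_X (m : ℕ) (a b : MvPolynomial (Fin 3) k) :
    presentation k (2 * m + 1) (inclXWZ k a + inclXWZ k b * X 1) =
      evenHom k (expandAt 2 (2 * m + 1) a) +
        evenHom k (ySq k ^ m * expandAt 2 (2 * m + 1) b) * X 1 := by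
  have hX : presentation k (2 * m + 1) (X 1) = X 1 ^ (2 * m + 1) := by simp [presentation]
  simp only [map_add, map_mul, map_pow, presentation_inclXWZ, hX, evenHom_ySq]
  ring

theorem presentation_inclXWZ_add_mul_X_eq_zero (h2 : IsUnit (2 : k)) {p : ℕ} (hp : Odd p)
    {a b : MvPolynomial (Fin 3) k}
    (h : presentation k p (inclXWZ k a + inclXWZ k b * X 1) = 0) : a = 0 ∧ b = 0 := by
  obtain ⟨m, rfl⟩ := hp
  rw [presentation_inclXWZ_add_mul_X] at h
  obtain ⟨ha, hb⟩ := evenHom_add_mul_X_eq_zero h2 h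
  rw [((isLeftRegular_ySq h2).pow m).mul_left_eq_zero_iff] at hb
  have hinj := expandAt_injective (R := k) (2 : Fin 3) (2 * m).succ_pos
  exact ⟨(map_eq_zero_iff _ hinj).mp ha, (map_eq_zero_iff _ hinj).mp hb⟩

theorem adjoin_eq_range_presentation (h2 : IsUnit (2 : k)) (p : ℕ) :
    Algebra.adjoin k {X 0, X 1 ^ p, X 2 ^ p, X 1 ^ 2 - 2 * (X 0 * X 2)} =
      (presentation k p).range := by
  apply le_antisymm
  · rw [Algebra.adjoin_le_iff]
    rintro f (rfl | rfl | rfl | rfl)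
    · exact mem_of_two_mul_mem h2 ⟨X 0, by simp [presentation]⟩
    · exact ⟨X 1, by simp [presentation]⟩
    · exact ⟨X 2, by simp [presentation]⟩
    · exact ⟨X 3, by simp [presentation]⟩
  · rw [presentation, ← Algebra.adjoin_range_eq_range_aeval, Algebra.adjoin_le_iff]
    rintro _ ⟨i, rfl⟩
    fin_cases i
    · exact mul_mem (ofNat_mem _ 2) (Algebra.subset_adjoin (by simp))
    all_goals exact Algebra.subset_adjoin (by simp)

variable (k) in
theorem range_presentation_le_invariants (p : ℕ) [CharP k p] :
    (presentation k p).range ≤ invariants (D6 k) := by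
  have hx : evenHom k (X 0) ∈ invariants (D6 k) :=
    evenHom_mem_invariants (pderiv_X_of_ne (by decide))
  have hw : evenHom k (X 1) ∈ invariants (D6 k) :=
    evenHom_mem_invariants (pderiv_X_of_ne (by decide))
  rw [presentation, ← Algebra.adjoin_range_eq_range_aeval, Algebra.adjoin_le_iff]
  rintro _ ⟨i, rfl⟩
  fin_cases i
  · simpa [evenHom] using hx
  · exact apply_pow_char p _
  · exact apply_pow_char p _
  · simpa [evenHom] using hw

end Presentation

section CharP

variable {p : ℕ} [hp : Fact p.Prime] [CharP k p]

variable (k p) in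
theorem presentation_relation : presentation k p (relation k p) = 0 := by
  simp only [presentation, relation, map_sub, map_pow, map_mul, aeval_X, Matrix.cons_val]
  rw [sub_pow_char]
  ring

variable (k) in
theorem ker_presentation (h2 : p ≠ 2) :
    RingHom.ker (presentation k p).toRingHom = Ideal.span {relation k p} := by
  have hrel : Ideal.span {relation k p} ≤ RingHom.ker (presentation k p).toRingHom := by
    rw [Ideal.span_singleton_le_iff_mem]
    exact presentation_relation k p
  refine le_antisymm (fun F hF ↦ ?_) hrel
  obtain ⟨a, b, hab⟩ := exists_sub_inclXWZ_add_mul_X_mem_span p F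
  have hker : inclXWZ k a + inclXWZ k b * X 1 ∈ RingHom.ker (presentation k p).toRingHom := by
    simpa using sub_mem hF (hrel hab)
  obtain ⟨rfl, rfl⟩ := presentation_inclXWZ_add_mul_X_eq_zero (isUnit_two_of_charP_ne_two h2)
    (hp.out.odd_of_ne_two h2) hker
  simpa using hab

theorem exists_eq_ySq_pow_mul (h2 : p ≠ 2) {m : ℕ} (hm : p = 2 * m + 1)
    {b : MvPolynomial (Fin 3) k} (hb : 2 * ySq k * pderiv 2 b + X 0 * b = 0) :
    ∃ c, b = ySq k ^ m * c ∧ pderiv 2 c = 0 := by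
  have hu : IsLeftRegular (ySq k) := isLeftRegular_ySq (isUnit_two_of_charP_ne_two h2)
  have hX : pderiv 2 (ySq k) = X 0 := by
    simp [ySq, pderiv_X_of_ne (show (1 : Fin 3) ≠ 2 by decide),
      pderiv_X_of_ne (show (0 : Fin 3) ≠ 2 by decide)]
  have hunit : ∀ j < m, IsUnit ((2 * j + 1 : ℕ) : MvPolynomial (Fin 3) k) := fun j hj ↦
    (CharP.isUnit_natCast_iff hp.out).mpr (Nat.not_dvd_of_pos_of_lt (2 * j).succ_pos (by omega))
  obtain ⟨c, rfl, hc⟩ := exists_eq_pow_mul_of_derivation_eq (pderiv 2) hu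
    (fun c ↦ by simpa only [hX] using ySq_dvd_of_ySq_dvd_X_mul) (by simpa only [hX] using hb)
    m hunit
  refine ⟨c, rfl, ?_⟩
  rwa [← hm, CharP.cast_eq_zero, zero_mul, add_zero, mul_assoc,
    (isUnit_two_of_charP_ne_two h2).mul_right_eq_zero, hu.mul_left_eq_zero_iff] at hc

variable (k) in
theorem invariants_le_range_presentation (h2 : p ≠ 2) :
    invariants (D6 k) ≤ (presentation k p).range := by
  intro f hf
  have h2k : IsUnit (2 : k) := isUnit_two_of_charP_ne_two h2
  obtain ⟨a, b, rfl⟩ := exists_eq_evenHom_add_mul_X h2k f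
  have hD := two_mul_apply_evenHom_add_mul_X a b
  rw [show D6 k (evenHom k a + evenHom k b * X 1) = 0 from hf, mul_zero, eq_comm] at hD
  obtain ⟨hb, ha⟩ := evenHom_add_mul_X_eq_zero h2k hD
  rw [(isUnit_two_of_charP_ne_two h2).mul_right_eq_zero] at ha
  obtain ⟨m, hm⟩ := hp.out.odd_of_ne_two h2
  obtain ⟨c, rfl, hc⟩ := exists_eq_ySq_pow_mul h2 hm hb
  obtain ⟨a, rfl⟩ := mem_range_expandAt_of_pderiv_eq_zero (p := p) ha
  obtain ⟨c, rfl⟩ := mem_range_expandAt_of_pderiv_eq_zero (p := p) hc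
  subst hm
  exact ⟨inclXWZ k a + inclXWZ k c * X 1, presentation_inclXWZ_add_mul_X m a c⟩

variable (k) in
theorem range_presentation (h2 : p ≠ 2) : (presentation k p).range = invariants (D6 k) :=
  le_antisymm (range_presentation_le_invariants k p) (invariants_le_range_presentation k h2)

end CharP

end D6

theorem stmt6_general (p : ℕ) [Fact p.Prime] (hp3 : 3 ≤ p) (k : Type*) [CommRing k] [CharP k p] :
    invariants (D6 k) =
      Algebra.adjoin k {X 0, (X 1) ^ p, (X 2) ^ p, (X 1) ^ 2 - 2 * (X 0 * X 2)} ∧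
    ∃ φ : MvPolynomial (Fin 4) k →ₐ[k] MvPolynomial (Fin 3) k,
      φ (X 0) = 2 * X 0 ∧ φ (X 1) = (X 1) ^ p ∧ φ (X 2) = (X 2) ^ p ∧
      φ (X 3) = (X 1) ^ 2 - 2 * (X 0 * X 2) ∧
      RingHom.ker φ.toRingHom = Ideal.span {(X 1) ^ 2 - (X 3) ^ p - (X 0) ^ p * X 2} ∧
      φ.range = invariants (D6 k) := by
  have h2 : p ≠ 2 := by omega
  refine ⟨?_, D6.presentation k p, ?_, ?_, ?_, ?_, D6.ker_presentation k h2,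
    D6.range_presentation k h2⟩
  · rw [D6.adjoin_eq_range_presentation (isUnit_two_of_charP_ne_two h2) p,
      D6.range_presentation k h2]
  all_goals simp [D6.presentation]

/-- For `p ≥ 3` and `D x = 0, D y = x, D z = y` on `k[x,y,z]` in characteristic `p`, the
invariant ring is `k[x, y^p, z^p, y² - 2xz]`, isomorphic to
`k[X,Y,Z,W]/(Y² - W^p - X^p Z)` via `X ↦ 2x, Y ↦ y^p, Z ↦ z^p, W ↦ y² - 2xz`. -/
theorem stmt6 (p : ℕ) [Fact p.Prime] (hp3 : 3 ≤ p) (k : Type*) [Field k] [CharP k p] :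
    invariants (D6 k) =
      Algebra.adjoin k {X 0, (X 1) ^ p, (X 2) ^ p, (X 1) ^ 2 - 2 * (X 0 * X 2)} ∧
    ∃ φ : MvPolynomial (Fin 4) k →ₐ[k] MvPolynomial (Fin 3) k,
      φ (X 0) = 2 * X 0 ∧ φ (X 1) = (X 1) ^ p ∧ φ (X 2) = (X 2) ^ p ∧
      φ (X 3) = (X 1) ^ 2 - 2 * (X 0 * X 2) ∧
      RingHom.ker φ.toRingHom = Ideal.span {(X 1) ^ 2 - (X 3) ^ p - (X 0) ^ p * X 2} ∧
      φ.range = invariants (D6 k) :=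
  stmt6_general p hp3 k
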